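/- arXiv:0712.0576 — 2 statements merged into one kernel-verified Lean document; each statement's English description precedes it below -/
import Mathlib

section
/- Let ρ be a nonzero finite measure on (0,∞) with ∫₀^∞ y² ρ(dy) < ∞, and let η be a σ-finite measure on (0,∞) with ∫₀^∞ min(y²,1) η(dy) < ∞. If the multiplicative convolution η⊛ρ has a slowly varying tail, then η has a slowly varying tail and lim_{x→∞} (η⊛ρ)(x,∞)/η(x,∞) = ρ((0,∞)). (This is the measure-theoretic core of the statement that if a stochastic integral X = ∫ f dM with f ≥ 0 supported on a set of finite Lebesgue measure and f ∈ L² has a slowly varying tail, then the Lévy measure of the Lévy process M has a slowly varying tail with tail ratio Leb{f ≠ 0}.) -/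
/-!
Write `T(x) = (η ⊛ ρ)(x,∞)`, `H(x) = η(x,∞)` and `m = ρ(0,∞)`. Everything rests on
`T(x) = ∫ H(x/y) ρ(dy)` (`mulConv_Ioi`) and on `H` being decreasing; the claim is `H/T → 1/m`.

* Keeping only `y ≥ c` gives `ρ[c,∞) H(x/c) ≤ T(x)`. As `T` is slowly varying and
  `ρ[c,∞) → m` as `c ↓ 0`, this yields `limsup H/T ≤ 1/m`.
* Splitting at `y = b` gives `T(x) ≤ m H(x/b) + ∫_{y>b} H(x/y) ρ(dy)`. By
  `eventually_tail_le`, `H(x/y) ≤ K y² T(x)` for all `y ≥ 1` once `x` is large, so the last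
  integral is at most `K T(x) ∫_{y>b} y² ρ(dy)`, which is a small multiple of `T(x)` for
  large `b`. This yields `liminf H/T ≥ 1/m`.

The domination combines `H = O(T)` from the first step, Potter's bound
`T(x/y) ≤ 2 y T(x)` (`antitone_potter`), and Markov's inequality for `min(y²,1)` under `η`, which
controls `H` near `0`. Slow variation of `H` then follows from that of `T` and `H/T → 1/m`.
-/


open MeasureTheory Set Filter ProbabilityTheory
open scoped ENNReal Topology

noncomputable section

/-- Multiplicative convolution of two measures (on `(0,∞)`, modeled as measures on `ℝ`):
`(ν ⊛ ρ)(B) = ∫ ν(x⁻¹ B) ρ(dx)`. -/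
def mulConv (ν ρ : Measure ℝ) : Measure ℝ :=
  ρ.bind fun x => ν.map fun y => x * y

/-- The measure `ν_α` on `(0,∞)`, with density `|α| x^{-(α+1)}` w.r.t. Lebesgue measure
when `α ≠ 0`, and density `x⁻¹` when `α = 0`. -/
def nuAlpha (α : ℝ) : Measure ℝ :=
  (volume.restrict (Ioi (0:ℝ))).withDensity fun x =>
    ENNReal.ofReal (if α = 0 then x⁻¹ else |α| * x ^ (-(α + 1)))

/-- `L` is slowly varying at infinity: `L(cx)/L(x) → 1` as `x → ∞`, for every `c > 0`. -/
def SlowlyVarying (L : ℝ → ℝ) : Prop :=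
  ∀ c : ℝ, 0 < c → Tendsto (fun x => L (c * x) / L x) atTop (nhds 1)

/-- The measure `μ` has a regularly varying (right) tail with exponent `α`:
`μ(x,∞) = x^{-α} L(x)` for all `x > 0`, where `L` is slowly varying
(and eventually positive) at infinity. -/
def HasRegVarTail (μ : Measure ℝ) (α : ℝ) : Prop :=
  ∃ L : ℝ → ℝ, SlowlyVarying L ∧ (∀ᶠ x in atTop, 0 < L x) ∧
    ∀ x : ℝ, 0 < x → μ (Ioi x) = ENNReal.ofReal (x ^ (-α) * L x)

/-- The moment condition `∫₀^∞ (y^{α-δ} ∨ y^{α+δ}) ρ(dy) < ∞`. -/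
def MomentCond (ρ : Measure ℝ) (α δ : ℝ) : Prop :=
  ∫⁻ y in Ioi (0:ℝ), ENNReal.ofReal (max (y ^ (α - δ)) (y ^ (α + δ))) ∂ρ < ⊤

/-- The nonvanishing condition `∫₀^∞ y^{α+iθ} ρ(dy) ≠ 0` for all `θ ∈ ℝ`. -/
def MellinNonvanishing (ρ : Measure ℝ) (α : ℝ) : Prop :=
  ∀ θ : ℝ, (∫ y in Ioi (0:ℝ), (y : ℂ) ^ ((α : ℂ) + (θ : ℂ) * Complex.I) ∂ρ) ≠ 0

/-- `ρ` has the cancellation property with respect to `{ν_α}`: for every σ-finite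
measure `ν` on `(0,∞)`, `ν ⊛ ρ = ν_α ⊛ ρ` implies `ν = ν_α`. -/
def HasCancellation (ρ : Measure ℝ) (α : ℝ) : Prop :=
  ∀ ν : Measure ℝ, SigmaFinite ν → ν (Iic 0) = 0 →
    mulConv ν ρ = mulConv (nuAlpha α) ρ → ν = nuAlpha α

/-- Condition (2.18): `lim_{b↓0} limsup_{x→∞} (∫₀^b ρ(x/y,∞) ν(dy)) / ((ν⊛ρ)(x,∞)) = 0`. -/
def Cond218 (ν ρ : Measure ℝ) : Prop :=
  Tendsto (fun b : ℝ =>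
      limsup (fun x : ℝ =>
        (∫⁻ y in Ioc (0:ℝ) b, ρ (Ioi (x / y)) ∂ν).toReal
          / ((mulConv ν ρ) (Ioi x)).toReal) atTop)
    (nhdsWithin 0 (Ioi 0)) (nhds 0)

/-- The tail formula for `η ⊛ ρ`. Restricting to `y > 0` is harmless as `ρ` is carried by `(0,∞)`,
and it makes `y * z > x` equivalent to `z > x / y`. -/
theorem mulConv_Ioi (η ρ : Measure ℝ) [SigmaFinite η] (hρ : ρ (Iic 0) = 0) (x : ℝ) :
    mulConv η ρ (Ioi x) = ∫⁻ y in Ioi (0:ℝ), η (Ioi (x / y)) ∂ρ := by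
  have hmeas : Measurable fun x : ℝ => η.map fun y => x * y := by
    refine Measure.measurable_of_measurable_coe _ fun s hs => ?_
    have h1 : ∀ x : ℝ, (η.map fun y => x * y) s = η (Prod.mk x ⁻¹' ((fun p : ℝ × ℝ => p.1 * p.2) ⁻¹' s)) := by
      intro x
      rw [Measure.map_apply (measurable_const_mul x) hs]
      rfl
    simp_rw [h1]
    exact measurable_measure_prodMk_left ((measurable_fst.mul measurable_snd) hs)
  have hres : ρ.restrict (Ioi 0) = ρ := by
    refine Measure.restrict_eq_self_of_ae_mem ?_
    rw [ae_iff]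
    simp only [mem_Ioi, not_lt]
    exact hρ
  rw [mulConv, Measure.bind_apply measurableSet_Ioi hmeas.aemeasurable]
  conv_lhs => rw [← hres]
  refine setLIntegral_congr_fun measurableSet_Ioi fun y hy => ?_
  rw [Measure.map_apply (measurable_const_mul y) measurableSet_Ioi]
  congr 1
  ext z
  have hy' : (0:ℝ) < y := hy
  simp only [mem_preimage, mem_Ioi]
  rw [div_lt_iff₀ hy', mul_comm]

theorem exists_lt_measure_Ici (ρ : Measure ℝ) [IsFiniteMeasure ρ] {a : ℝ}
    (ha : a < (ρ (Ioi 0)).toReal) : ∃ c > 0, a < (ρ (Ici c)).toReal := by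
  have hmono : Monotone fun n : ℕ => Ici (1 / ((n:ℝ) + 1)) := fun i j hij =>
    Ici_subset_Ici.2 (Nat.one_div_le_one_div hij)
  have hU : ⋃ n : ℕ, Ici (1 / ((n:ℝ) + 1)) = Ioi 0 := by
    ext y
    simp only [mem_iUnion, mem_Ici, mem_Ioi]
    constructor
    · rintro ⟨n, hn⟩
      exact Nat.one_div_pos_of_nat.trans_le hn
    · intro hy
      obtain ⟨n, hn⟩ := exists_nat_one_div_lt hy
      exact ⟨n, hn.le⟩
  have h := tendsto_measure_iUnion_atTop (μ := ρ) hmono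
  rw [hU] at h
  have h' := (ENNReal.tendsto_toReal (measure_ne_top ρ _)).comp h
  obtain ⟨n, hn⟩ := (h'.eventually_const_lt ha).exists
  exact ⟨_, Nat.one_div_pos_of_nat, hn⟩

theorem exists_setLIntegral_sq_lt (ρ : Measure ℝ) [IsFiniteMeasure ρ]
    (hρ2 : ∫⁻ y in Ioi (0:ℝ), ENNReal.ofReal (y ^ 2) ∂ρ < ⊤) {ε : ℝ} (hε : 0 < ε) :
    ∃ b : ℝ, 1 ≤ b ∧ ∫⁻ y in Ioi b, ENNReal.ofReal (y ^ 2) ∂ρ ≤ ENNReal.ofReal ε := by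
  have hanti : Antitone fun n : ℕ => Ioi (n:ℝ) := fun i j hij =>
    Ioi_subset_Ioi (Nat.cast_le.2 hij)
  have hempty : ⋂ n : ℕ, Ioi (n:ℝ) = ∅ := by
    ext y
    simp only [mem_iInter, mem_Ioi, mem_empty_iff_false, iff_false, not_forall, not_lt]
    exact exists_nat_ge y
  have h := tendsto_measure_iInter_atTop (μ := ρ.restrict (Ioi 0))
    (fun n : ℕ => measurableSet_Ioi.nullMeasurableSet) hanti ⟨0, measure_ne_top _ _⟩
  rw [hempty, measure_empty] at h
  have h2 := tendsto_setLIntegral_zero hρ2.ne h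
  obtain ⟨n, hn, hn1⟩ := ((h2.eventually_lt_const (ENNReal.ofReal_pos.2 hε)).and
    (eventually_ge_atTop 1)).exists
  refine ⟨n, by exact_mod_cast hn1, ?_⟩
  rw [Measure.restrict_restrict measurableSet_Ioi, Ioi_inter_Ioi,
    sup_eq_left.2 (Nat.cast_nonneg n)] at hn
  exact hn.le

/-- Potter's bound with exponent `1` for an antitone function. Antitonicity reduces it to dyadic
`y`, where the doubling estimate is iterated, so no uniform convergence theorem is needed. -/
theorem antitone_potter {T : ℝ → ℝ} {x₀ : ℝ} (hx₀ : 0 < x₀) (hanti : AntitoneOn T (Ioi 0))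
    (hT0 : ∀ x, 0 ≤ T x) (h : ∀ u, x₀ ≤ u → T (u / 2) ≤ 2 * T u)
    {x y : ℝ} (hy : 1 ≤ y) (hxy : x₀ ≤ x / y) : T (x / y) ≤ 2 * y * T x := by
  -- the weaker bound `2 ^ n * x₀ ≤ x` lets the last halving go below `x₀`
  have key : ∀ n : ℕ, ∀ x, 2 ^ n * x₀ ≤ x → T (x / 2 ^ (n + 1)) ≤ 2 ^ (n + 1) * T x := by
    intro n
    induction n with
    | zero => intro x hx; simpa using h x (by simpa using hx)
    | succ n ih =>
      intro x hx
      have h2 : x₀ ≤ x := by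
        refine le_trans ?_ hx
        exact le_mul_of_one_le_left hx₀.le (one_le_pow₀ (by norm_num))
      have h1 := ih (x / 2) (by rw [pow_succ] at hx; linarith)
      have h3 := h x h2
      have e : x / 2 / 2 ^ (n + 1) = x / 2 ^ (n + 1 + 1) := by
        rw [div_div, pow_succ 2 (n + 1), mul_comm]
      rw [e] at h1
      calc _ ≤ _ := h1
        _ ≤ 2 ^ (n + 1) * (2 * T x) := by gcongr
        _ = _ := by ring
  have hy0 : 0 < y := by linarith
  obtain ⟨n, hn1, hn2⟩ := exists_nat_pow_near hy (by norm_num : (1:ℝ) < 2)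
  have hx : x₀ * y ≤ x := (le_div_iff₀ hy0).1 hxy
  have hxpos : 0 < x := lt_of_lt_of_le (by positivity) hx
  have h1 := key n x (by nlinarith)
  have h2 : T (x / y) ≤ T (x / 2 ^ (n + 1)) := by
    apply hanti
    · exact div_pos hxpos (by positivity)
    · exact div_pos hxpos hy0
    · gcongr
  have h4 : (2:ℝ) ^ (n + 1) ≤ 2 * y := by rw [pow_succ]; linarith
  calc _ ≤ _ := h2
    _ ≤ _ := h1
    _ ≤ _ := by gcongr; exact hT0 x

/-- Quadratic domination of `H(x/y)`, uniform in `y ≥ 1` for each large `x`. While `x/y` stays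
large it follows from Potter's bound for `T`. For `y` of order at least `x`, the bound on
`H(u) * min (u ^ 2) 1` gives `H(x/y) = O(y²/x²)`, and Potter's bound gives `1/x = O(T(x))`. -/
theorem eventually_tail_le {H T : ℝ → ℝ} {I C : ℝ} (hanti : AntitoneOn T (Ioi 0))
    (hT0 : ∀ x, 0 ≤ T x) (hTpos : ∀ᶠ x in atTop, 0 < T x) (hSV : SlowlyVarying T)
    (hHT : ∀ᶠ x in atTop, H x ≤ C * T x)
    (hI : ∀ u, 0 < u → H u * min (u ^ 2) 1 ≤ I) (hH0 : ∀ x, 0 ≤ H x) :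
    ∃ K, 0 < K ∧ ∀ᶠ x in atTop, ∀ y, 1 ≤ y → H (x / y) ≤ K * y ^ 2 * T x := by
  have hhalf : ∀ᶠ u in atTop, T (u / 2) ≤ 2 * T u := by
    filter_upwards [(hSV (1 / 2) (by norm_num)).eventually_lt_const (by norm_num : (1:ℝ) < 2),
      hTpos] with u h1 h2
    rw [div_lt_iff₀ h2] at h1
    rw [show u / 2 = 1 / 2 * u by ring]
    exact h1.le
  obtain ⟨x₀, hx₀⟩ := ((hhalf.and (hHT.and hTpos)).and (eventually_ge_atTop 1)).exists_forall_of_atTop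
  have h1x : 1 ≤ x₀ := (hx₀ x₀ le_rfl).2
  have h0x : 0 < x₀ := by linarith
  have hp := fun x y hy hxy => antitone_potter (x := x) (y := y) h0x hanti hT0 (fun u hu => (hx₀ u hu).1.1) hy hxy
  have hTx₀ : 0 < T x₀ := (hx₀ x₀ le_rfl).1.2.2
  have hI0 : 0 ≤ I := le_trans (mul_nonneg (hH0 1) (by positivity)) (hI 1 one_pos)
  have hq : 0 < 2 * x₀ ^ 2 * I / (x₀ * T x₀) + 2 * |C| + 1 := by positivity
  refine ⟨_, hq, ?_⟩
  filter_upwards [eventually_ge_atTop x₀] with x hx y hy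
  have hy0 : 0 < y := by linarith
  have hxpos : 0 < x := by linarith
  have hTx := hT0 x
  have hu : 0 < x / y := by positivity
  rcases le_or_gt x₀ (x / y) with h | h
  · have h1 := (hx₀ _ h).1.2.1
    have h2 := hp x y hy h
    calc H (x / y) ≤ C * T (x / y) := h1
      _ ≤ |C| * T (x / y) := by gcongr; exact hT0 _; exact le_abs_self C
      _ ≤ |C| * (2 * y * T x) := by gcongr
      _ = (2 * |C|) * y * T x := by ring
      _ ≤ (2 * x₀ ^ 2 * I / (x₀ * T x₀) + 2 * |C| + 1) * y ^ 2 * T x := by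
        gcongr
        · have : 0 ≤ 2 * x₀ ^ 2 * I / (x₀ * T x₀) := by positivity
          linarith
        · nlinarith
  · have hb : T x₀ ≤ 2 * (x / x₀) * T x := by
      have := hp x (x / x₀) ((one_le_div h0x).2 hx) (by rw [div_div_cancel₀ hxpos.ne'])
      rwa [div_div_cancel₀ hxpos.ne'] at this
    have hu2 : (x / y) ^ 2 ≤ x₀ ^ 2 * min ((x / y) ^ 2) 1 := by
      rw [mul_min_of_nonneg _ _ (by positivity)]
      refine le_min ?_ ?_
      · exact le_mul_of_one_le_left (by positivity) (one_le_pow₀ h1x)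
      · rw [mul_one]; gcongr
    have h3 : H (x / y) * (x / y) ^ 2 ≤ x₀ ^ 2 * I := by
      calc _ ≤ H (x / y) * (x₀ ^ 2 * min ((x / y) ^ 2) 1) := by gcongr; exact hH0 _
        _ = x₀ ^ 2 * (H (x / y) * min ((x / y) ^ 2) 1) := by ring
        _ ≤ _ := by gcongr; exact hI _ hu
    have h4 : H (x / y) ≤ x₀ ^ 2 * I * y ^ 2 / x ^ 2 := by
      rw [le_div_iff₀ (by positivity)]
      rw [div_pow, ← mul_div_assoc, div_le_iff₀ (by positivity)] at h3
      exact h3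
    have h5 : 1 / x ^ 2 ≤ 2 * T x / (x₀ * T x₀) := by
      have hx1 : 1 / x ^ 2 ≤ 1 / x := by
        apply one_div_le_one_div_of_le hxpos
        nlinarith
      refine hx1.trans ?_
      rw [div_le_div_iff₀ hxpos (by positivity)]
      have : 2 * (x / x₀) * T x * x₀ = 2 * T x * x := by field_simp
      nlinarith
    calc H (x / y) ≤ x₀ ^ 2 * I * y ^ 2 / x ^ 2 := h4
      _ = x₀ ^ 2 * I * y ^ 2 * (1 / x ^ 2) := by ring
      _ ≤ x₀ ^ 2 * I * y ^ 2 * (2 * T x / (x₀ * T x₀)) := by gcongr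
      _ = (2 * x₀ ^ 2 * I / (x₀ * T x₀)) * y ^ 2 * T x := by ring
      _ ≤ _ := by
        gcongr
        have := abs_nonneg C
        linarith

/-- The squeeze behind the tail ratio: slow variation absorbs the dilations by `c` and `b` in the
one-sided comparisons `hlow` and `hup`. -/
theorem tendsto_tail_ratio {H T : ℝ → ℝ} {m : ℝ} (hm : 0 < m)
    (hTpos : ∀ᶠ x in atTop, 0 < T x) (hSV : SlowlyVarying T)
    (hlow : ∀ a < m, ∃ c > 0, ∃ q > a, ∀ x > 0, H (x / c) * q ≤ T x)
    (hup : ∀ ε > 0, ∃ b > 0, ∀ᶠ x in atTop, T x ≤ m * H (x / b) + ε * T x) :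
    Tendsto (fun x => H x / T x) atTop (𝓝 m⁻¹) := by
  have hmul : ∀ c : ℝ, 0 < c → Tendsto (fun x => c * x) atTop atTop := fun c hc =>
    tendsto_id.const_mul_atTop hc
  rw [tendsto_order]
  constructor
  · intro a ha
    have hε : 0 < (1 - m * a) / 2 := by
      have := mul_lt_mul_of_pos_left ha hm
      rw [mul_inv_cancel₀ hm.ne'] at this
      linarith
    obtain ⟨b, hb, hev⟩ := hup _ hε
    have hlim : Tendsto (fun x => (1 - (1 - m * a) / 2) / m * (T (b * x) / T x)) atTop
        (𝓝 ((1 - (1 - m * a) / 2) / m * 1)) := (hSV b hb).const_mul _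
    have hlt : a < (1 - (1 - m * a) / 2) / m * 1 := by
      rw [mul_one, lt_div_iff₀ hm]; linarith
    filter_upwards [hlim.eventually_const_lt hlt, (hmul b hb).eventually hev, hTpos] with x h1 h2 h3
    refine h1.trans_le ?_
    rw [mul_div_cancel_left₀ _ hb.ne'] at h2
    rw [← mul_div_assoc]
    gcongr
    rw [div_mul_eq_mul_div, div_le_iff₀ hm]
    linarith
  · intro a ha
    have ha0 : 0 < a := (inv_pos.2 hm).trans ha
    obtain ⟨c, hc, q, hq, h⟩ := hlow a⁻¹ (inv_lt_of_inv_lt₀ hm ha)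
    have hq0 : 0 < q := (inv_pos.2 ha0).trans hq
    have hlim : Tendsto (fun x => q⁻¹ * (T (c * x) / T x)) atTop (𝓝 (q⁻¹ * 1)) :=
      (hSV c hc).const_mul _
    have hlt : q⁻¹ * 1 < a := by rw [mul_one]; exact inv_lt_of_inv_lt₀ ha0 hq
    filter_upwards [hlim.eventually_lt_const hlt, hTpos, eventually_gt_atTop 0] with x h1 h2 h3
    refine lt_of_le_of_lt ?_ h1
    have := h (c * x) (by positivity)
    rw [mul_div_cancel_left₀ _ hc.ne'] at this
    rw [← mul_div_assoc]
    gcongr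
    rw [inv_mul_eq_div, le_div_iff₀ hq0]
    exact this

/-- measure-theoretic core of Proposition 5.4. Let `ρ` be a nonzero
finite measure on `(0,∞)` with `∫₀^∞ y² ρ(dy) < ∞` and `η` a σ-finite measure on
`(0,∞)` with `∫₀^∞ min(y²,1) η(dy) < ∞`. If `η ⊛ ρ` has a slowly varying tail, then
`η` has a slowly varying tail and `(η⊛ρ)(x,∞)/η(x,∞) → ρ((0,∞))`. -/
theorem slowVar_levy_of_slowVar_mulConv
    (ρ : Measure ℝ) [IsFiniteMeasure ρ] (hρ : ρ ≠ 0) (hρsupp : ρ (Iic 0) = 0)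
    (hρ2 : ∫⁻ y in Ioi (0:ℝ), ENNReal.ofReal (y ^ 2) ∂ρ < ⊤)
    (η : Measure ℝ) [SigmaFinite η] (hηsupp : η (Iic 0) = 0)
    (hη : ∫⁻ y in Ioi (0:ℝ), ENNReal.ofReal (min (y ^ 2) 1) ∂η < ⊤)
    (hRV : HasRegVarTail (mulConv η ρ) 0) :
    HasRegVarTail η 0 ∧
      Tendsto (fun x : ℝ => ((mulConv η ρ) (Ioi x)).toReal / (η (Ioi x)).toReal) atTop
        (nhds (ρ (Ioi 0)).toReal) := by
  set I := ∫⁻ y in Ioi (0:ℝ), ENNReal.ofReal (min (y ^ 2) 1) ∂η with hIdef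
  have hform := mulConv_Ioi η ρ hρsupp
  set Te : ℝ → ℝ≥0∞ := fun x => mulConv η ρ (Ioi x) with hTe
  set H : ℝ → ℝ := fun x => (η (Ioi x)).toReal with hH
  set T : ℝ → ℝ := fun x => (Te x).toReal with hT
  set m : ℝ := (ρ (Ioi 0)).toReal with hmdef
  have hm : 0 < m := by
    refine ENNReal.toReal_pos (fun h => hρ ?_) (measure_ne_top _ _)
    rw [← Measure.measure_univ_eq_zero, ← Iic_union_Ioi (a := (0:ℝ))]
    exact measure_union_null hρsupp h
  have hMarkov : ∀ u, 0 < u → η (Ioi u) * ENNReal.ofReal (min (u ^ 2) 1) ≤ I := by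
    intro u hu
    rw [mul_comm, ← setLIntegral_const]
    refine (setLIntegral_mono' measurableSet_Ioi fun y hy => ?_).trans
      (lintegral_mono_set (Ioi_subset_Ioi hu.le))
    have hy' : u < y := hy
    gcongr
  have hHfin : ∀ u, 0 < u → η (Ioi u) ≠ ⊤ := by
    intro u hu h
    have h1 := hMarkov u hu
    rw [h, ENNReal.top_mul (by simpa using hu.ne')] at h1
    exact absurd (h1.trans_lt hη) (lt_irrefl _)
  have hI : ∀ u, 0 < u → H u * min (u ^ 2) 1 ≤ I.toReal := by
    intro u hu
    have := ENNReal.toReal_mono hη.ne (hMarkov u hu)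
    rwa [ENNReal.toReal_mul, ENNReal.toReal_ofReal (by positivity)] at this
  obtain ⟨L, hLSV, hLpos, hL⟩ := hRV
  have hTfin : ∀ x, 0 < x → Te x ≠ ⊤ := fun x hx => by
    simp only [hTe]; rw [hL x hx]; exact ENNReal.ofReal_ne_top
  have hTL : T =ᶠ[atTop] L := by
    filter_upwards [hLpos, eventually_gt_atTop 0] with x h1 h2
    simp only [hT, hTe]
    rw [hL x h2, neg_zero, Real.rpow_zero, one_mul, ENNReal.toReal_ofReal h1.le]
  have hTpos : ∀ᶠ x in atTop, 0 < T x := by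
    filter_upwards [hTL, hLpos] with x h1 h2
    rwa [h1]
  have hmul : ∀ c : ℝ, 0 < c → Tendsto (fun x => c * x) atTop atTop := fun c hc =>
    tendsto_id.const_mul_atTop hc
  have hSV : SlowlyVarying T := by
    intro c hc
    refine (hLSV c hc).congr' ?_
    filter_upwards [hTL, (hmul c hc).eventually hTL] with x h1 h2
    rw [h1, h2]
  have hT0 : ∀ x, 0 ≤ T x := fun x => ENNReal.toReal_nonneg
  have hH0 : ∀ x, 0 ≤ H x := fun x => ENNReal.toReal_nonneg
  have hanti : AntitoneOn T (Ioi 0) := fun x hx y hy hxy =>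
    ENNReal.toReal_mono (hTfin x hx) (measure_mono (Ioi_subset_Ioi hxy))
  have hlow : ∀ a < m, ∃ c > 0, ∃ q > a, ∀ x > 0, H (x / c) * q ≤ T x := by
    intro a ha
    obtain ⟨c, hc, hq⟩ := exists_lt_measure_Ici ρ ha
    refine ⟨c, hc, _, hq, fun x hx => ?_⟩
    have h1 : η (Ioi (x / c)) * ρ (Ici c) ≤ Te x := by
      rw [← setLIntegral_const]
      simp only [hTe]
      rw [hform]
      refine (setLIntegral_mono' measurableSet_Ici fun y hy => ?_).trans
        (lintegral_mono_set (Ici_subset_Ioi.2 hc))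
      have hy' : c ≤ y := hy
      refine measure_mono (Ioi_subset_Ioi ?_)
      gcongr
    have := ENNReal.toReal_mono (hTfin x hx) h1
    rwa [ENNReal.toReal_mul] at this
  obtain ⟨C, hHT⟩ : ∃ C, ∀ᶠ x in atTop, H x ≤ C * T x := by
    obtain ⟨c, hc, q, hq, h⟩ := hlow 0 hm
    refine ⟨2 / q, ?_⟩
    filter_upwards [(hSV c hc).eventually_lt_const (by norm_num : (1:ℝ) < 2), hTpos,
      eventually_gt_atTop 0] with x h1 h2 h3
    have h4 := h (c * x) (by positivity)
    rw [mul_div_cancel_left₀ _ hc.ne'] at h4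
    rw [div_lt_iff₀ h2] at h1
    rw [div_mul_eq_mul_div, le_div_iff₀ hq]
    linarith
  obtain ⟨K, hK, hdom⟩ := eventually_tail_le hanti hT0 hTpos hSV hHT hI hH0
  have hup : ∀ ε > 0, ∃ b > 0, ∀ᶠ x in atTop, T x ≤ m * H (x / b) + ε * T x := by
    intro ε hε
    obtain ⟨b, hb, hbε⟩ := exists_setLIntegral_sq_lt ρ hρ2 (ε := ε / K) (by positivity)
    have hb0 : 0 < b := by linarith
    refine ⟨b, hb0, ?_⟩
    filter_upwards [hdom, eventually_gt_atTop 0] with x hx hx0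
    have h1 : Te x ≤ η (Ioi (x / b)) * ρ (Ioi 0) + ENNReal.ofReal (ε * T x) := by
      simp only [hTe]
      rw [hform, ← Ioc_union_Ioi_eq_Ioi hb0.le]
      refine (lintegral_union_le _ _ _).trans (add_le_add ?_ ?_)
      · rw [← setLIntegral_const]
        refine (setLIntegral_mono' measurableSet_Ioc fun y hy => ?_).trans
          (lintegral_mono_set subset_union_left)
        refine measure_mono (Ioi_subset_Ioi ?_)
        have := hy.1
        have := hy.2
        gcongr
      · calc ∫⁻ y in Ioi b, η (Ioi (x / y)) ∂ρ
            ≤ ∫⁻ y in Ioi b, ENNReal.ofReal (K * T x) * ENNReal.ofReal (y ^ 2) ∂ρ := by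
              refine setLIntegral_mono' measurableSet_Ioi fun y hy => ?_
              have hy' : b < y := hy
              have hy0 : 0 < y := hb0.trans hy'
              rw [← ENNReal.ofReal_toReal (hHfin (x / y) (by positivity)),
                ← ENNReal.ofReal_mul (mul_nonneg hK.le (hT0 x))]
              refine ENNReal.ofReal_le_ofReal ((hx y (by linarith)).trans (le_of_eq (by ring)))
          _ = ENNReal.ofReal (K * T x) * ∫⁻ y in Ioi b, ENNReal.ofReal (y ^ 2) ∂ρ :=
              lintegral_const_mul _ (by fun_prop)
          _ ≤ ENNReal.ofReal (K * T x) * ENNReal.ofReal (ε / K) := by gcongr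
          _ = ENNReal.ofReal (ε * T x) := by
              rw [← ENNReal.ofReal_mul (mul_nonneg hK.le (hT0 x))]
              congr 1
              field_simp
    have hfin : η (Ioi (x / b)) * ρ (Ioi 0) ≠ ⊤ :=
      ENNReal.mul_ne_top (hHfin _ (by positivity)) (measure_ne_top _ _)
    have h2 := ENNReal.toReal_mono (ENNReal.add_ne_top.2 ⟨hfin, ENNReal.ofReal_ne_top⟩) h1
    rw [ENNReal.toReal_add hfin ENNReal.ofReal_ne_top, ENNReal.toReal_mul,
      ENNReal.toReal_ofReal (mul_nonneg hε.le (hT0 x)), mul_comm] at h2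
    exact h2
  have hlim := tendsto_tail_ratio hm hTpos hSV hlow hup
  have hinv : Tendsto (fun x => T x / H x) atTop (𝓝 m) := by
    have := hlim.inv₀ (inv_ne_zero hm.ne')
    rw [inv_inv] at this
    exact this.congr fun x => inv_div _ _
  have hHpos : ∀ᶠ x in atTop, 0 < H x := by
    filter_upwards [hlim.eventually_const_lt (inv_pos.2 hm)] with x h1
    refine (hH0 x).lt_of_ne' fun h => ?_
    rw [h, zero_div] at h1
    exact lt_irrefl _ h1
  refine ⟨⟨H, fun c hc => ?_, hHpos, fun x hx => ?_⟩, hinv⟩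
  · have h1 := ((hlim.comp (hmul c hc)).mul (hSV c hc)).mul hinv
    rw [mul_one, inv_mul_cancel₀ hm.ne'] at h1
    refine h1.congr' ?_
    filter_upwards [hTpos, (hmul c hc).eventually hTpos, hHpos] with x h2 h3 h4
    simp only [Function.comp]
    field_simp
  · rw [neg_zero, Real.rpow_zero, one_mul]
    exact (ENNReal.ofReal_toReal (hHfin x hx)).symm
end
end

section
/- Let α > 0, q ≥ 2 and let ψ₁,…,ψ_q be positive coefficients with ∑_{j=1}^q ψ_j^{α+iθ} ≠ 0 for all θ ∈ ℝ. Let G : [0,∞) → [0,∞) be a nondecreasing continuous function with G(0) = 0 such that for some c > 0, ∑_{j=1}^q G(ψ_j x) = c x^α for all x > 0. Then G(x) = (c / ∑_{j=1}^q ψ_j^α) · x^α for all x ≥ 0. (This is the key step in proving that if ∑_{j=1}^q ψ_j Z_j of i.i.d. Z_j has a totally right-skewed α-stable law, then Z₁ is α-stable: apply it to G(x) = −log E e^{−xZ₁}.) -/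
/-!
In logarithmic coordinates put `g t = e^{-αt} G(e^t) - K`, where `K = c / ∑ ψ_j^α`. The equation
for `G` becomes the homogeneous convolution equation `∑ a_j g(t + b_j) = 0` with `a_j = ψ_j^α` and
`b_j = log ψ_j`. Since `0 ≤ G(ψ_j x) ≤ c x^α`, the function `g` is bounded, and it is continuous.

The hypothesis on `ψ` says that the symbol `m(θ) = ∑ a_j e^{-2πiθ b_j}` has no real zero, so the
spectrum of `g`, which is contained in the zero set of `m`, is empty. Concretely
(`integral_mul_fourier_eq_zero`), any smooth compactly supported `h` is `m u` with `u = h / m` again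
smooth and compactly supported, hence `𝓕 h = ∑ a_j (𝓕 u)(· + b_j)`; moving the translations from
`𝓕 u` to `g` gives `∫ g(-s) 𝓕 h(s) ds = 0`. No lower bound on `|m|` over all of `ℝ` is needed.

The equation is invariant under affine changes of variable (with rescaled `b_j`), so also
`∫ g(t - s/n) 𝓕 h(s) ds = 0` for every `t` and `n ≥ 1`. As `n → ∞` this tends to
`g(t) ∫ 𝓕 h = g(t) h(0)`, and `g = 0` follows on taking `h(0) = 1`
(`eq_zero_of_sum_translates_eq_zero`).
-/

open MeasureTheory Set Filter ProbabilityTheory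
open scoped ENNReal Topology

noncomputable section

open scoped FourierTransform ContDiff

/-- The symbol of the operator `g ↦ ∑ j, a j * g (· + b j)`, with the normalization of the
frequency variable used by Mathlib's Fourier transform. -/
def translateSymbol {ι : Type*} [Fintype ι] (a : ι → ℂ) (b : ι → ℝ) (θ : ℝ) : ℂ :=
  ∑ j, a j * Complex.exp (((-2 * Real.pi * θ * b j : ℝ) : ℂ) * Complex.I)

lemma contDiff_translateSymbol {ι : Type*} [Fintype ι] (a : ι → ℂ) (b : ι → ℝ) :
    ContDiff ℝ ∞ (translateSymbol a b) := by
  unfold translateSymbol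
  refine ContDiff.sum fun j _ => contDiff_const.mul (ContDiff.cexp (ContDiff.mul ?_ contDiff_const))
  exact Complex.ofRealCLM.contDiff.comp
    (f := fun θ : ℝ => -2 * Real.pi * θ * b j) (by fun_prop)

lemma fourier_translateSymbol_mul {ι : Type*} [Fintype ι] (a : ι → ℂ) (b : ι → ℝ)
    {u : ℝ → ℂ} (hu : Integrable u) (s : ℝ) :
    𝓕 (fun θ => translateSymbol a b θ * u θ) s = ∑ j, a j * 𝓕 u (s + b j) := by
  simp only [Real.fourier_real_eq_integral_exp_smul, smul_eq_mul]
  simp_rw [← integral_const_mul]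
  rw [← integral_finsetSum]
  · refine integral_congr_ae (Eventually.of_forall fun v => ?_)
    simp only [translateSymbol, Finset.sum_mul, Finset.mul_sum]
    refine Finset.sum_congr rfl fun j _ => ?_
    have : (((-2 * Real.pi * v * (s + b j) : ℝ) : ℂ) * Complex.I)
        = ((-2 * Real.pi * v * s : ℝ) : ℂ) * Complex.I
          + ((-2 * Real.pi * v * b j : ℝ) : ℂ) * Complex.I := by
      push_cast; ring
    rw [this, Complex.exp_add]
    ring
  · intro j _
    refine Integrable.const_mul (hu.bdd_mul (c := 1) ?_ (Eventually.of_forall fun v => ?_)) _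
    · exact Continuous.aestronglyMeasurable (by fun_prop)
    · rw [Complex.norm_exp_ofReal_mul_I]

/-- A bounded continuous solution of `∑ j, a j * g (t + b j) = 0` whose symbol has no zero
annihilates the (reflected) Fourier transforms of test functions. -/
lemma integral_mul_fourier_eq_zero {ι : Type*} [Fintype ι] (a : ι → ℂ) (b : ι → ℝ)
    (hm : ∀ θ, translateSymbol a b θ ≠ 0)
    {g : ℝ → ℂ} (hg : Continuous g) {C : ℝ} (hC : ∀ t, ‖g t‖ ≤ C)
    (hsum : ∀ t, ∑ j, a j * g (t + b j) = 0)
    {h : ℝ → ℂ} (hh : ContDiff ℝ ∞ h) (hhc : HasCompactSupport h) :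
    ∫ s, g (-s) * 𝓕 h s = 0 := by
  let u : ℝ → ℂ := fun θ => (translateSymbol a b θ)⁻¹ * h θ
  have hu : ContDiff ℝ ∞ u := ((contDiff_translateSymbol a b).inv hm).mul hh
  have huc : HasCompactSupport u := hhc.mul_left
  have hh_eq : h = fun θ => translateSymbol a b θ * u θ := by
    funext θ
    simp only [u]
    rw [mul_inv_cancel_left₀ (hm θ)]
  have hui : Integrable u := hu.continuous.integrable_of_hasCompactSupport huc
  have hFi : Integrable (𝓕 u) := (𝓕 (huc.toSchwartzMap hu)).integrable
  have hF : ∀ s, 𝓕 h s = ∑ j, a j * 𝓕 u (s + b j) := fun s => by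
    conv_lhs => rw [hh_eq]
    exact fourier_translateSymbol_mul a b hui s
  have hint : ∀ j, Integrable fun s => g (-s + b j) * 𝓕 u s := fun j =>
    hFi.bdd_mul (c := C) (Continuous.aestronglyMeasurable (by fun_prop))
      (Eventually.of_forall fun s => hC _)
  have hint' : ∀ j, Integrable fun s => g (-s) * 𝓕 u (s + b j) := fun j =>
    (hFi.comp_add_right (b j)).bdd_mul (c := C) (Continuous.aestronglyMeasurable (by fun_prop))
      (Eventually.of_forall fun s => hC _)
  have hshift : ∀ j, ∫ s, g (-s) * 𝓕 u (s + b j) = ∫ s, g (-s + b j) * 𝓕 u s := fun j => by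
    rw [← integral_add_right_eq_self (fun s => g (-s + b j) * 𝓕 u s) (b j)]
    simp
  calc ∫ s, g (-s) * 𝓕 h s
      = ∫ s, ∑ j, a j * (g (-s) * 𝓕 u (s + b j)) := by
        refine integral_congr_ae (Eventually.of_forall fun s => ?_)
        simp only [hF, Finset.mul_sum]
        exact Finset.sum_congr rfl fun j _ => by ring
    _ = ∑ j, a j * ∫ s, g (-s) * 𝓕 u (s + b j) := by
        rw [integral_finsetSum _ fun j _ => (hint' j).const_mul _]
        simp_rw [integral_const_mul]
    _ = ∫ s, ∑ j, a j * (g (-s + b j) * 𝓕 u s) := by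
        rw [integral_finsetSum _ fun j _ => (hint j).const_mul _]
        simp_rw [integral_const_mul, hshift]
    _ = ∫ s, (∑ j, a j * g (-s + b j)) * 𝓕 u s := by
        simp_rw [Finset.sum_mul, mul_assoc]
    _ = 0 := by simp [hsum]

/-- A convolution equation with finitely supported kernel and nowhere vanishing symbol has no
nonzero bounded continuous solution. -/
lemma eq_zero_of_sum_translates_eq_zero {ι : Type*} [Fintype ι] (a : ι → ℂ) (b : ι → ℝ)
    (hm : ∀ θ, translateSymbol a b θ ≠ 0)
    {g : ℝ → ℂ} (hg : Continuous g) {C : ℝ} (hC : ∀ t, ‖g t‖ ≤ C)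
    (hsum : ∀ t, ∑ j, a j * g (t + b j) = 0) (t : ℝ) : g t = 0 := by
  let f : ContDiffBump (0 : ℝ) := ⟨1, 2, one_pos, one_lt_two⟩
  let h : ℝ → ℂ := fun θ => (f θ : ℂ)
  have hh : ContDiff ℝ ∞ h := Complex.ofRealCLM.contDiff.comp f.contDiff
  have hhc : HasCompactSupport h := f.hasCompactSupport.comp_left Complex.ofReal_zero
  have h0 : h 0 = 1 := by
    have : f 0 = 1 := f.one_of_mem_closedBall (by simp [f])
    simp [h, this]
  have hFi : Integrable (𝓕 h) := (𝓕 (hhc.toSchwartzMap hh)).integrable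
  have hFint : ∫ s, 𝓕 h s = 1 := by
    have := congrFun (hh.continuous.fourierInv_fourier_eq
      (hh.continuous.integrable_of_hasCompactSupport hhc) hFi) 0
    rw [Real.fourierInv_eq] at this
    simpa [h0] using this
  have hzero : ∀ n : ℕ, ∫ s, g (t + -s / (n + 1)) * 𝓕 h s = 0 := by
    intro n
    have hn : (n + 1 : ℝ) ≠ 0 := by positivity
    refine integral_mul_fourier_eq_zero a (fun j => (n + 1) * b j) (fun θ => ?_)
      (g := fun s => g (t + s / (n + 1))) (by fun_prop) (fun s => hC _) (fun s => ?_) hh hhc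
    · convert hm (θ * (n + 1)) using 1
      simp only [translateSymbol, mul_assoc]
    · rw [← hsum (t + s / (n + 1))]
      refine Finset.sum_congr rfl fun j _ => ?_
      congr 2
      field_simp
      ring
  have hlim : Tendsto (fun n : ℕ => ∫ s, g (t + -s / (n + 1)) * 𝓕 h s) atTop
      (𝓝 (∫ s, g t * 𝓕 h s)) := by
    refine tendsto_integral_of_dominated_convergence (fun s => C * ‖𝓕 h s‖) (fun n => ?_)
      (hFi.norm.const_mul C) (fun n => Eventually.of_forall fun s => ?_)
      (Eventually.of_forall fun s => ?_)
    · exact Continuous.aestronglyMeasurable (by fun_prop) |>.mul hFi.aestronglyMeasurable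
    · rw [norm_mul]
      exact mul_le_mul_of_nonneg_right (hC _) (norm_nonneg _)
    · refine Tendsto.mul_const _ ((hg.tendsto t).comp ?_)
      have h1 := (tendsto_one_div_add_atTop_nhds_zero_nat (𝕜 := ℝ)).const_mul (-s)
      have h2 := h1.const_add t
      simpa [div_eq_mul_inv] using h2
  simp only [hzero, integral_const_mul, hFint, mul_one] at hlim
  exact tendsto_nhds_unique hlim tendsto_const_nhds

/-- key step of Proposition 6.2. Let `α > 0`, `q ≥ 2`, and
`ψ₁, …, ψ_q` positive with `∑_{j=1}^q ψ_j^{α+iθ} ≠ 0` for all `θ ∈ ℝ`. Let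
`G : [0,∞) → [0,∞)` be nondecreasing and continuous with `G(0) = 0`, and suppose
`∑_{j=1}^q G(ψ_j x) = c x^α` for all `x > 0` and some `c > 0`. Then
`G(x) = (c / ∑_{j=1}^q ψ_j^α) x^α` for all `x ≥ 0`. -/
theorem power_solution_of_cancellation
    (α : ℝ) (hα : 0 < α) (q : ℕ) (hq : 2 ≤ q) (ψ : Fin q → ℝ) (hψ : ∀ j, 0 < ψ j)
    (hmel : ∀ θ : ℝ, (∑ j, (ψ j : ℂ) ^ ((α : ℂ) + (θ : ℂ) * Complex.I)) ≠ 0)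
    (G : ℝ → ℝ) (hmono : MonotoneOn G (Ici 0)) (hcont : ContinuousOn G (Ici 0))
    (hG0 : G 0 = 0) (hGnonneg : ∀ x : ℝ, 0 ≤ x → 0 ≤ G x)
    (c : ℝ) (hc : 0 < c) (hfe : ∀ x : ℝ, 0 < x → ∑ j, G (ψ j * x) = c * x ^ α) :
    ∀ x : ℝ, 0 ≤ x → G x = (c / ∑ j, ψ j ^ α) * x ^ α := by
  have hne : Nonempty (Fin q) := ⟨⟨0, by omega⟩⟩
  set S : ℝ := ∑ j, ψ j ^ α with hS
  have hSpos : 0 < S :=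
    Finset.sum_pos (fun j _ => Real.rpow_pos_of_pos (hψ j) α) Finset.univ_nonempty
  have hexp : ∀ t : ℝ, Real.exp t ^ α = Real.exp (α * t) := fun t => by
    rw [← Real.exp_mul, mul_comm]
  let g : ℝ → ℝ := fun t => Real.exp (-(α * t)) * G (Real.exp t) - c / S
  have hgc : Continuous g := by
    have : Continuous fun t : ℝ => G (Real.exp t) :=
      hcont.comp_continuous Real.continuous_exp fun t => (Real.exp_pos t).le
    exact (Continuous.mul (by fun_prop) this).sub continuous_const
  have hsum : ∀ t, ∑ j, ψ j ^ α * g (t + Real.log (ψ j)) = 0 := by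
    intro t
    have hterm : ∀ j, ψ j ^ α * g (t + Real.log (ψ j))
        = Real.exp (-(α * t)) * G (ψ j * Real.exp t) - ψ j ^ α * (c / S) := fun j => by
      have h1 : Real.exp (t + Real.log (ψ j)) = ψ j * Real.exp t := by
        rw [Real.exp_add, Real.exp_log (hψ j), mul_comm]
      have h2 : ψ j ^ α * Real.exp (-(α * (t + Real.log (ψ j)))) = Real.exp (-(α * t)) := by
        rw [Real.rpow_def_of_pos (hψ j), ← Real.exp_add]
        congr 1
        ring
      simp only [g]
      rw [h1, mul_sub, ← mul_assoc, h2]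
    simp_rw [hterm]
    rw [Finset.sum_sub_distrib, ← Finset.mul_sum, ← Finset.sum_mul, hfe _ (Real.exp_pos t), hexp,
      mul_div_cancel₀ _ hSpos.ne', mul_left_comm, ← Real.exp_add]
    simp
  obtain ⟨j₀⟩ := hne
  have hbound : ∀ t, |g t| ≤ c * Real.exp (-(α * Real.log (ψ j₀))) + c / S := by
    intro t
    set x : ℝ := Real.exp (t - Real.log (ψ j₀)) with hx
    have hx0 : 0 < x := Real.exp_pos _
    have hψx : ψ j₀ * x = Real.exp t := by
      rw [hx, Real.exp_sub, Real.exp_log (hψ j₀), mul_div_cancel₀ _ (hψ j₀).ne']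
    have hle : G (Real.exp t) ≤ c * x ^ α := by
      rw [← hψx, ← hfe x hx0]
      exact Finset.single_le_sum (f := fun j => G (ψ j * x))
        (fun j _ => hGnonneg _ (mul_pos (hψ j) hx0).le) (Finset.mem_univ j₀)
    have h1 : Real.exp (-(α * t)) * G (Real.exp t) ≤ c * Real.exp (-(α * Real.log (ψ j₀))) := by
      refine (mul_le_mul_of_nonneg_left hle (Real.exp_pos _).le).trans_eq ?_
      rw [hx, hexp, mul_left_comm, ← Real.exp_add]
      congr 2
      ring
    have h2 : 0 ≤ Real.exp (-(α * t)) * G (Real.exp t) :=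
      mul_nonneg (Real.exp_pos _).le (hGnonneg _ (Real.exp_pos _).le)
    have h3 : 0 < c / S := div_pos hc hSpos
    rw [abs_le]
    constructor <;> simp only [g] <;> linarith
  have hsymb : ∀ θ, translateSymbol (fun j => ((ψ j ^ α : ℝ) : ℂ)) (fun j => Real.log (ψ j)) θ
      ≠ 0 := by
    intro θ
    convert hmel (-2 * Real.pi * θ) using 1
    refine Finset.sum_congr rfl fun j _ => ?_
    have hψ0 : (ψ j : ℂ) ≠ 0 := Complex.ofReal_ne_zero.mpr (hψ j).ne'
    beta_reduce
    rw [Complex.cpow_add _ _ hψ0, Complex.ofReal_cpow (hψ j).le]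
    congr 1
    rw [Complex.cpow_def_of_ne_zero hψ0, ← Complex.ofReal_log (hψ j).le]
    congr 1
    push_cast
    ring
  have hg0 : ∀ t, g t = 0 := fun t => by
    have := eq_zero_of_sum_translates_eq_zero _ _ hsymb (g := fun s => (g s : ℂ))
      (Complex.continuous_ofReal.comp hgc)
      (fun s => by rw [Complex.norm_real]; exact hbound s)
      (fun s => by exact_mod_cast hsum s) t
    exact_mod_cast this
  intro x hx
  rcases hx.eq_or_lt with rfl | hx
  · rw [hG0, Real.zero_rpow hα.ne', mul_zero]
  · have h1 := hg0 (Real.log x)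
    simp only [g] at h1
    rw [Real.exp_log hx, sub_eq_zero] at h1
    rw [← h1, Real.rpow_def_of_pos hx, mul_right_comm, ← Real.exp_add]
    rw [show -(α * Real.log x) + Real.log x * α = 0 by ring, Real.exp_zero, one_mul]
end
end
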